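/- For every k-cd c̄ for n nodes (n ≥ 1) and every color j ∈ [k] ∖ M(c̄), it holds that μ_j(c̄) = c_j·(1 + γ(c̄) + α(c̄) − (m(c̄) − c_j)/n). -/

import Mathlib

/-!
A node adopts color `j` exactly when its last two samples both have color `j`, or when they
disagree and its first sample has color `j`. If `p h` is the fraction of nodes colored `h`, this
happens with probability `p j ^ 2 + p j * (1 - ∑ h, p h ^ 2)`, so by linearity of expectation
`μ_j = n * p j * (1 + p j - ∑ h, p h ^ 2)`. Since `γ + α = m / n - ∑ h, p h ^ 2`, the quantity `m`
cancels in `1 + γ + α - (m - c_j) / n`, leaving the same expression for every color, maximal or not.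
-/

open Finset

/-- The color appearing at least twice among `x, y, z`, or `x` if all three are distinct. -/
def maj3 {k : ℕ} (x y z : Fin k) : Fin k := if y = z then y else x

/-- Number of nodes with color `j` in the assignment `a`. -/
def cnt {n k : ℕ} (a : Fin n → Fin k) (j : Fin k) : ℕ :=
  (Finset.univ.filter (fun i => a i = j)).card

/-- One sample for a round of the 3-majority dynamics: each node picks three nodes
(uniformly at random, with replacement). -/
abbrev Sample (n : ℕ) := Fin n → Fin n × Fin n × Fin n

/-- The assignment obtained from `a` after one step of the 3-majority dynamics with samples `S`. -/
def stepA {n k : ℕ} (a : Fin n → Fin k) (S : Sample n) : Fin n → Fin k :=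
  fun i => maj3 (a (S i).1) (a (S i).2.1) (a (S i).2.2)

/-- Probability that the event `E` holds for the configuration obtained from `a`
after one step of the 3-majority dynamics (samples are uniform and independent). -/
noncomputable def stepPr {n k : ℕ} (a : Fin n → Fin k) (E : (Fin n → Fin k) → Prop) : ℝ :=
  (Nat.card {S : Sample n // E (stepA a S)} : ℝ) / (Nat.card (Sample n) : ℝ)

/-- Expectation of `f` of the configuration obtained from `a` after one step of the
3-majority dynamics. -/
noncomputable def stepE {n k : ℕ} (a : Fin n → Fin k) (f : (Fin n → Fin k) → ℝ) : ℝ :=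
  (∑ S : Sample n, f (stepA a S)) / (Nat.card (Sample n) : ℝ)

/-- `m(c̄)`: the size of the largest color class. -/
def mval {k : ℕ} (c : Fin k → ℕ) : ℕ := Finset.univ.sup c

/-- `M(c̄)`: the set of colors attaining the maximum. -/
def Mset {k : ℕ} (c : Fin k → ℕ) : Finset (Fin k) :=
  Finset.univ.filter (fun j => c j = mval c)

/-- `s(c̄)`: the bias, i.e. the gap between the (unique) maximum and the second largest
color class; `0` if the maximum is not unique. -/
def sval {k : ℕ} (c : Fin k → ℕ) : ℕ :=
  if (Mset c).card = 1 then mval c - (Finset.univ \ Mset c).sup c else 0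

/-- `α(c̄) = (n − m(c̄))·s(c̄)/n²`. -/
noncomputable def alphaV (n : ℕ) {k : ℕ} (c : Fin k → ℕ) : ℝ :=
  ((n : ℝ) - mval c) * sval c / (n : ℝ) ^ 2

/-- `γ(c̄) = (n·m(c̄) − Σ_h c_h²)/n² − α(c̄)`. -/
noncomputable def gammaV (n : ℕ) {k : ℕ} (c : Fin k → ℕ) : ℝ :=
  ((n : ℝ) * mval c - ∑ h, (c h : ℝ) ^ 2) / (n : ℝ) ^ 2 - alphaV n c

/-- The trajectory of the 3-majority dynamics started at `a`, driven by the samples `S`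
for the first `N` rounds. -/
def trajA {n k N : ℕ} (a : Fin n → Fin k) (S : Fin N → Sample n) : ℕ → Fin n → Fin k
  | 0 => a
  | t + 1 => if h : t < N then stepA (trajA a S t) (S ⟨t, h⟩) else trajA a S t

/-- Probability of an event `E` for an `N`-round run of the 3-majority dynamics
(all samples of all rounds are uniform and independent). -/
noncomputable def runPr {n k : ℕ} (N : ℕ) (a : Fin n → Fin k)
    (E : (Fin N → Sample n) → Prop) : ℝ :=
  (Nat.card {S : Fin N → Sample n // E S} : ℝ) / (Nat.card (Fin N → Sample n) : ℝ)

open scoped BigOperators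

lemma expect_comp_eval {ι T M : Type*} [Fintype ι] [DecidableEq ι] [Fintype T] [AddCommMonoid M]
    [Module ℚ≥0 M] (i : ι) (g : T → M) : 𝔼 S : ι → T, g (S i) = 𝔼 t, g t := by
  cases isEmpty_or_nonempty T
  · have : IsEmpty (ι → T) := ⟨fun S => isEmptyElim (S i)⟩
    simp only [univ_eq_empty, expect_empty]
  calc 𝔼 S : ι → T, g (S i) = 𝔼 p : T × ({i' // i' ≠ i} → T), g p.1 :=
        Fintype.expect_equiv (Equiv.funSplitAt i T) _ _ fun _ => rfl
    _ = 𝔼 t, g t := by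
        simp only [← univ_product_univ, expect_product, Fintype.expect_const]

section MajorityOfSamples

variable {k : ℕ} {R : Type*}

lemma ite_maj3_eq [AddGroupWithOne R] (x y z j : Fin k) :
    (if maj3 x y z = j then 1 else 0 : R) =
      (if x = j then 1 else 0) +
        if y = z then (if y = j then 1 else 0) - (if x = j then 1 else 0) else 0 := by
  unfold maj3
  split_ifs <;> simp

lemma sum_mul_ite_maj3 [CommRing R] {p : Fin k → R} (hp : ∑ h, p h = 1) (j : Fin k) :
    ∑ x, p x * ∑ y, p y * ∑ z, p z * (if maj3 x y z = j then 1 else 0) =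
      p j ^ 2 + p j * (1 - ∑ h, p h ^ 2) := by
  have sum_third (x y : Fin k) : ∑ z, p z * (if maj3 x y z = j then 1 else 0) =
      (if x = j then 1 else 0) +
        p y * ((if y = j then 1 else 0) - (if x = j then 1 else 0)) := by
    simp only [ite_maj3_eq, mul_add, sum_add_distrib]
    rw [← sum_mul, hp, one_mul]
    simp only [mul_ite_zero, sum_ite_eq, mem_univ, if_true]
  have sum_second (u : R) : ∑ y, p y * (u + p y * ((if y = j then 1 else 0) - u)) =
      p j ^ 2 + u * (1 - ∑ h, p h ^ 2) := by
    calc ∑ y, p y * (u + p y * ((if y = j then 1 else 0) - u))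
        = ∑ y, (p y * u + p y ^ 2 * (if y = j then 1 else 0) - p y ^ 2 * u) :=
          sum_congr rfl fun y _ => by ring
      _ = u + p j ^ 2 - (∑ h, p h ^ 2) * u := by
          rw [sum_sub_distrib, sum_add_distrib, ← sum_mul, ← sum_mul, hp, one_mul]
          simp only [mul_boole, sum_ite_eq', mem_univ, if_true]
      _ = p j ^ 2 + u * (1 - ∑ h, p h ^ 2) := by ring
  simp only [sum_third, sum_second]
  simp only [mul_add, sum_add_distrib, ← mul_assoc]
  rw [← sum_mul, ← sum_mul, hp, one_mul]
  simp only [mul_boole, sum_ite_eq', mem_univ, if_true]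

end MajorityOfSamples

section ThreeMajority

variable {n k : ℕ}

/-- The fraction of nodes colored `h` in the assignment `a`, that is, the probability that a
uniformly random node has color `h` (equal to `0` for the empty set of nodes). -/
noncomputable def colorFreq (a : Fin n → Fin k) (h : Fin k) : ℝ := cnt a h / n

lemma expect_comp_coloring (a : Fin n → Fin k) (f : Fin k → ℝ) :
    𝔼 i, f (a i) = ∑ h, colorFreq a h * f h := by
  rw [Fintype.expect_eq_sum_div_card, Fintype.card_fin, ← sum_fiberwise' univ a f, sum_div]
  refine sum_congr rfl fun h _ => ?_
  rw [sum_const, nsmul_eq_mul, colorFreq, cnt, div_mul_eq_mul_div]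

lemma sum_colorFreq (hn : n ≠ 0) (a : Fin n → Fin k) : ∑ h, colorFreq a h = 1 := by
  have : NeZero n := ⟨hn⟩
  simpa only [mul_one, Fintype.expect_const] using (expect_comp_coloring a fun _ => 1).symm

lemma stepE_eq_expect (a : Fin n → Fin k) (f : (Fin n → Fin k) → ℝ) :
    stepE a f = 𝔼 S, f (stepA a S) := by
  rw [stepE, Fintype.expect_eq_sum_div_card, Nat.card_eq_fintype_card]

lemma stepE_ite_apply_eq (hn : n ≠ 0) (a : Fin n → Fin k) (i : Fin n) (j : Fin k) :
    stepE a (fun b => if b i = j then 1 else 0) =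
      colorFreq a j ^ 2 + colorFreq a j * (1 - ∑ h, colorFreq a h ^ 2) := by
  calc stepE a (fun b => if b i = j then 1 else 0)
      = 𝔼 t : Fin n × Fin n × Fin n, if maj3 (a t.1) (a t.2.1) (a t.2.2) = j then 1 else 0 := by
        rw [stepE_eq_expect]
        exact expect_comp_eval i fun t : Fin n × Fin n × Fin n =>
          if maj3 (a t.1) (a t.2.1) (a t.2.2) = j then (1 : ℝ) else 0
    _ = 𝔼 x, 𝔼 y, 𝔼 z, if maj3 (a x) (a y) (a z) = j then 1 else 0 := by
        simp only [← univ_product_univ, expect_product]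
    _ = ∑ x, colorFreq a x * ∑ y, colorFreq a y * ∑ z, colorFreq a z *
          (if maj3 x y z = j then 1 else 0) := by
        simp only [← expect_comp_coloring]
    _ = _ := sum_mul_ite_maj3 (sum_colorFreq hn a) j

lemma stepE_cnt (hn : n ≠ 0) (a : Fin n → Fin k) (j : Fin k) :
    stepE a (fun b => (cnt b j : ℝ)) =
      cnt a j * (1 + colorFreq a j - ∑ h, colorFreq a h ^ 2) := by
  calc stepE a (fun b => (cnt b j : ℝ))
      = ∑ i, stepE a (fun b => if b i = j then 1 else 0) := by
        simp only [stepE_eq_expect, cnt, natCast_card_filter, expect_sum_comm]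
    _ = n * (colorFreq a j ^ 2 + colorFreq a j * (1 - ∑ h, colorFreq a h ^ 2)) := by
        simp only [stepE_ite_apply_eq hn, sum_const, card_univ, Fintype.card_fin, nsmul_eq_mul]
    _ = n * colorFreq a j * (1 + colorFreq a j - ∑ h, colorFreq a h ^ 2) := by ring
    _ = _ := by rw [colorFreq, mul_div_cancel₀ _ (Nat.cast_ne_zero.mpr hn)]

lemma gammaV_add_alphaV (hn : n ≠ 0) (c : Fin k → ℕ) :
    gammaV n c + alphaV n c = (mval c : ℝ) / n - ∑ h, ((c h : ℝ) / n) ^ 2 := by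
  simp only [gammaV, div_pow, ← sum_div]
  field_simp
  ring

theorem mu_nonmax_eq_general (hn : n ≠ 0) (a : Fin n → Fin k) (j : Fin k) :
    stepE a (fun b => (cnt b j : ℝ)) =
      cnt a j * (1 + gammaV n (cnt a) + alphaV n (cnt a) -
        ((mval (cnt a) : ℝ) - cnt a j) / n) := by
  rw [stepE_cnt hn, add_assoc 1, gammaV_add_alphaV hn]
  simp only [colorFreq]
  ring

end ThreeMajority

/-- Lemma (3maj-max-expected), part (b): for every `j ∈ [k] ∖ M(c̄)`,
`μ_j(c̄) = c_j·(1 + γ(c̄) + α(c̄) − (m(c̄) − c_j)/n)`. -/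
theorem mu_nonmax_eq (n k : ℕ) (hn : 1 ≤ n) (c : Fin k → ℕ) (hc : ∑ h, c h = n)
    (a : Fin n → Fin k) (ha : ∀ h, cnt a h = c h) (j : Fin k) (hj : j ∉ Mset c) :
    stepE a (fun b => (cnt b j : ℝ)) =
      (c j : ℝ) * (1 + gammaV n c + alphaV n c - ((mval c : ℝ) - (c j : ℝ)) / (n : ℝ)) := by
  obtain rfl : cnt a = c := funext ha
  exact mu_nonmax_eq_general (Nat.one_le_iff_ne_zero.mp hn) a j
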